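/- For any interpretation I of a PEUF p-formula F, there is a maximally diverse interpretation I* for F such that: if I*[F] is true then I[F] is true. -/

import Mathlib

mutual
inductive EufTerm (Fn Pr : Type) : Type
  | app : Fn → List (EufTerm Fn Pr) → EufTerm Fn Pr
  | ite : EufFormula Fn Pr → EufTerm Fn Pr → EufTerm Fn Pr → EufTerm Fn Pr
inductive EufFormula (Fn Pr : Type) : Type
  | tt : EufFormula Fn Pr
  | ff : EufFormula Fn Pr
  | not : EufFormula Fn Pr → EufFormula Fn Pr
  | and : EufFormula Fn Pr → EufFormula Fn Pr → EufFormula Fn Pr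
  | or : EufFormula Fn Pr → EufFormula Fn Pr → EufFormula Fn Pr
  | eq : EufTerm Fn Pr → EufTerm Fn Pr → EufFormula Fn Pr
  | papp : Pr → List (EufTerm Fn Pr) → EufFormula Fn Pr
end

structure Interp (Fn Pr : Type) (D : Type u) where
  fn : Fn → List D → D
  pr : Pr → List D → Bool

open Classical in
mutual
noncomputable def evalT {Fn Pr : Type} {D : Type} (I : Interp Fn Pr D) : EufTerm Fn Pr → D
  | .app f args => I.fn f (args.attach.map (fun t => evalT I t.1))
  | .ite G T1 T2 => if evalF I G then evalT I T1 else evalT I T2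
termination_by t => sizeOf t
decreasing_by
  all_goals simp_wf
  all_goals try omega
  all_goals (have := List.sizeOf_lt_of_mem t.2; omega)
noncomputable def evalF {Fn Pr : Type} {D : Type} (I : Interp Fn Pr D) : EufFormula Fn Pr → Bool
  | .tt => true
  | .ff => false
  | .not G => !evalF I G
  | .and G1 G2 => evalF I G1 && evalF I G2
  | .or G1 G2 => evalF I G1 || evalF I G2
  | .eq T1 T2 => decide (evalT I T1 = evalT I T2)
  | .papp p args => I.pr p (args.attach.map (fun t => evalT I t.1))
termination_by g => sizeOf g
decreasing_by
  all_goals simp_wf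
  all_goals try omega
  all_goals (have := List.sizeOf_lt_of_mem t.2; omega)
end
def ValidOn {Fn Pr : Type} (F : EufFormula Fn Pr) (D : Type) : Prop :=
  ∀ I : Interp Fn Pr D, evalF I F = true

def UniversallyValid {Fn Pr : Type} (F : EufFormula Fn Pr) : Prop :=
  ∀ D : Type, Nonempty D → ValidOn F D

/-- Expressions: terms or formulas. -/
inductive EufExpr (Fn Pr : Type) : Type
  | t : EufTerm Fn Pr → EufExpr Fn Pr
  | f : EufFormula Fn Pr → EufExpr Fn Pr

/-- Immediate (proper) subexpression relation. -/
inductive ImmSub {Fn Pr : Type} : EufExpr Fn Pr → EufExpr Fn Pr → Prop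
  | appArg {g : Fn} {args : List (EufTerm Fn Pr)} {T : EufTerm Fn Pr} :
      T ∈ args → ImmSub (.t T) (.t (.app g args))
  | iteC {G : EufFormula Fn Pr} {T1 T2 : EufTerm Fn Pr} : ImmSub (.f G) (.t (.ite G T1 T2))
  | ite1 {G : EufFormula Fn Pr} {T1 T2 : EufTerm Fn Pr} : ImmSub (.t T1) (.t (.ite G T1 T2))
  | ite2 {G : EufFormula Fn Pr} {T1 T2 : EufTerm Fn Pr} : ImmSub (.t T2) (.t (.ite G T1 T2))
  | not {G : EufFormula Fn Pr} : ImmSub (.f G) (.f (.not G))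
  | andL {G1 G2 : EufFormula Fn Pr} : ImmSub (.f G1) (.f (.and G1 G2))
  | andR {G1 G2 : EufFormula Fn Pr} : ImmSub (.f G2) (.f (.and G1 G2))
  | orL {G1 G2 : EufFormula Fn Pr} : ImmSub (.f G1) (.f (.or G1 G2))
  | orR {G1 G2 : EufFormula Fn Pr} : ImmSub (.f G2) (.f (.or G1 G2))
  | eqL {T1 T2 : EufTerm Fn Pr} : ImmSub (.t T1) (.f (.eq T1 T2))
  | eqR {T1 T2 : EufTerm Fn Pr} : ImmSub (.t T2) (.f (.eq T1 T2))
  | pappArg {p : Pr} {args : List (EufTerm Fn Pr)} {T : EufTerm Fn Pr} :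
      T ∈ args → ImmSub (.t T) (.f (.papp p args))

/-- `SubExpr a b`: `a` occurs (as a subexpression) in `b`. -/
def SubExpr {Fn Pr : Type} (a b : EufExpr Fn Pr) : Prop := Relation.ReflTransGen ImmSub a b

def TermInT {Fn Pr : Type} (T S : EufTerm Fn Pr) : Prop := SubExpr (.t T) (.t S)
def TermInF {Fn Pr : Type} (T : EufTerm Fn Pr) (F : EufFormula Fn Pr) : Prop :=
  SubExpr (.t T) (.f F)
def FormulaInT {Fn Pr : Type} (G : EufFormula Fn Pr) (S : EufTerm Fn Pr) : Prop :=
  SubExpr (.f G) (.t S)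
def FormulaInF {Fn Pr : Type} (G F : EufFormula Fn Pr) : Prop := SubExpr (.f G) (.f F)

def IsAppTerm {Fn Pr : Type} : EufTerm Fn Pr → Prop
  | .app _ _ => True
  | _ => False

/-- `𝒯(F)`: the function application terms occurring in `F`. -/
def AppTermsF {Fn Pr : Type} (F : EufFormula Fn Pr) : Set (EufTerm Fn Pr) :=
  {T | IsAppTerm T ∧ TermInF T F}

/-- A function symbol occurs in `F` when some application of it occurs in `F`. -/
def FnInF {Fn Pr : Type} (g : Fn) (F : EufFormula Fn Pr) : Prop :=
  ∃ args, TermInF (EufTerm.app g args) F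

def PrInF {Fn Pr : Type} (p : Pr) (F : EufFormula Fn Pr) : Prop :=
  ∃ args, FormulaInF (EufFormula.papp p args) F

/-- `I` is diverse for `F` with respect to the set `Sg` of function symbols. -/
def DiverseFor {Fn Pr D : Type} (I : Interp Fn Pr D) (F : EufFormula Fn Pr)
    (Sg : Set Fn) : Prop :=
  ∀ (g : Fn) (args : List (EufTerm Fn Pr)), g ∈ Sg →
    TermInF (EufTerm.app g args) F →
    ∀ T2 ∈ AppTermsF F, evalT I (EufTerm.app g args) = evalT I T2 →
      ∃ args2, T2 = EufTerm.app g args2 ∧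
        List.Forall₂ (fun a b => evalT I a = evalT I b) args args2

mutual
/-- PEUF g-terms, where `isP` designates the p-function symbols. -/
inductive IsGTerm {Fn Pr : Type} (isP : Fn → Prop) : EufTerm Fn Pr → Prop
  | ite {G : EufFormula Fn Pr} {T1 T2 : EufTerm Fn Pr} :
      IsGFormula isP G → IsGTerm isP T1 → IsGTerm isP T2 → IsGTerm isP (.ite G T1 T2)
  | app {g : Fn} {args : List (EufTerm Fn Pr)} :
      ¬ isP g → (∀ T ∈ args, IsPTerm isP T) → IsGTerm isP (.app g args)
/-- PEUF p-terms. -/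
inductive IsPTerm {Fn Pr : Type} (isP : Fn → Prop) : EufTerm Fn Pr → Prop
  | g {T : EufTerm Fn Pr} : IsGTerm isP T → IsPTerm isP T
  | ite {G : EufFormula Fn Pr} {T1 T2 : EufTerm Fn Pr} :
      IsGFormula isP G → IsPTerm isP T1 → IsPTerm isP T2 → IsPTerm isP (.ite G T1 T2)
  | app {g : Fn} {args : List (EufTerm Fn Pr)} :
      isP g → (∀ T ∈ args, IsPTerm isP T) → IsPTerm isP (.app g args)
/-- PEUF g-formulas. -/
inductive IsGFormula {Fn Pr : Type} (isP : Fn → Prop) : EufFormula Fn Pr → Prop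
  | tt : IsGFormula isP .tt
  | ff : IsGFormula isP .ff
  | not {G : EufFormula Fn Pr} : IsGFormula isP G → IsGFormula isP (.not G)
  | and {G1 G2 : EufFormula Fn Pr} :
      IsGFormula isP G1 → IsGFormula isP G2 → IsGFormula isP (.and G1 G2)
  | or {G1 G2 : EufFormula Fn Pr} :
      IsGFormula isP G1 → IsGFormula isP G2 → IsGFormula isP (.or G1 G2)
  | eq {T1 T2 : EufTerm Fn Pr} :
      IsGTerm isP T1 → IsGTerm isP T2 → IsGFormula isP (.eq T1 T2)
  | papp {p : Pr} {args : List (EufTerm Fn Pr)} :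
      (∀ T ∈ args, IsPTerm isP T) → IsGFormula isP (.papp p args)
/-- PEUF p-formulas. -/
inductive IsPFormula {Fn Pr : Type} (isP : Fn → Prop) : EufFormula Fn Pr → Prop
  | g {G : EufFormula Fn Pr} : IsGFormula isP G → IsPFormula isP G
  | and {G1 G2 : EufFormula Fn Pr} :
      IsPFormula isP G1 → IsPFormula isP G2 → IsPFormula isP (.and G1 G2)
  | or {G1 G2 : EufFormula Fn Pr} :
      IsPFormula isP G1 → IsPFormula isP G2 → IsPFormula isP (.or G1 G2)
  | eq {T1 T2 : EufTerm Fn Pr} :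
      IsPTerm isP T1 → IsPTerm isP T2 → IsPFormula isP (.eq T1 T2)
end

/-- The p-function symbols occurring in `F`. -/
def PSymbolsIn {Fn Pr : Type} (isP : Fn → Prop) (F : EufFormula Fn Pr) : Set Fn :=
  {g | isP g ∧ FnInF g F}

/-- `I` is maximally diverse for the p-formula `F`. -/
def MaxDiverse {Fn Pr D : Type} (isP : Fn → Prop) (I : Interp Fn Pr D)
    (F : EufFormula Fn Pr) : Prop :=
  DiverseFor I F (PSymbolsIn isP F)

/-- `I'` refines `I` on the term set `Ts`. -/
def RefinesOn {Fn Pr D D' : Type} (I' : Interp Fn Pr D') (I : Interp Fn Pr D)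
    (Ts : Set (EufTerm Fn Pr)) : Prop :=
  ∀ T1 ∈ Ts, ∀ T2 ∈ Ts, evalT I' T1 = evalT I' T2 → evalT I T1 = evalT I T2

def ProperRefinesOn {Fn Pr D D' : Type} (I' : Interp Fn Pr D') (I : Interp Fn Pr D)
    (Ts : Set (EufTerm Fn Pr)) : Prop :=
  RefinesOn I' I Ts ∧
    ∃ T1 ∈ Ts, ∃ T2 ∈ Ts, evalT I T1 = evalT I T2 ∧ evalT I' T1 ≠ evalT I' T2

inductive DivDom (Fn D : Type) : Type
  | d : D → DivDom Fn D
  | p : D → Fn → List (DivDom Fn D) → DivDom Fn D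

def DivDom.val {Fn D : Type} : DivDom Fn D → D
  | .d x => x
  | .p x _ _ => x

open Classical in
noncomputable def divInterp {Fn Pr D : Type} (isP : Fn → Prop) (I : Interp Fn Pr D) :
    Interp Fn Pr (DivDom Fn D) where
  fn f args := if isP f then .p (I.fn f (args.map DivDom.val)) f args
    else .d (I.fn f (args.map DivDom.val))
  pr q args := I.pr q (args.map DivDom.val)

theorem evalT_app {Fn Pr D : Type} (I : Interp Fn Pr D) (f : Fn) (args) :
    evalT I (.app f args) = I.fn f (args.map (evalT I)) := by
  rw [evalT]; simp

theorem evalF_papp {Fn Pr D : Type} (I : Interp Fn Pr D) (f : Pr) (args) :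
    evalF I (.papp f args) = I.pr f (args.map (evalT I)) := by
  rw [evalF]; simp

theorem div_val_app {Fn Pr D : Type} (isP : Fn → Prop) (I : Interp Fn Pr D) (f : Fn)
    (args : List (EufTerm Fn Pr))
    (h : ∀ T ∈ args, (evalT (divInterp isP I) T).val = evalT I T) :
    (evalT (divInterp isP I) (.app f args)).val = evalT I (.app f args) := by
  have : args.map (DivDom.val ∘ evalT (divInterp isP I)) = args.map (evalT I) :=
    List.map_congr_left h
  rw [evalT_app, evalT_app, ← this]
  simp only [divInterp]
  split <;> simp [DivDom.val]

mutual
theorem div_gterm {Fn Pr D : Type} {isP : Fn → Prop} (I : Interp Fn Pr D) :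
    ∀ {T : EufTerm Fn Pr}, IsGTerm isP T → evalT (divInterp isP I) T = .d (evalT I T)
  | _, .ite hG h1 h2 => by
    have a := div_gformula I hG
    have b := div_gterm I h1
    have c := div_gterm I h2
    rw [evalT, evalT, a, b, c]
    split <;> rfl
  | .app f args, .app hg hargs => by
    have h := div_val_app isP I f args (fun T hT => div_pterm I (hargs T hT))
    rw [← h, evalT_app]
    simp [divInterp, hg, DivDom.val]
theorem div_pterm {Fn Pr D : Type} {isP : Fn → Prop} (I : Interp Fn Pr D) :
    ∀ {T : EufTerm Fn Pr}, IsPTerm isP T → (evalT (divInterp isP I) T).val = evalT I T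
  | _, .g h => by
    have a := div_gterm I h
    rw [a]; rfl
  | _, .ite hG h1 h2 => by
    have a := div_gformula I hG
    have b := div_pterm I h1
    have c := div_pterm I h2
    rw [evalT, evalT, a, ← b, ← c]
    split <;> rfl
  | .app f args, .app hg hargs =>
    div_val_app isP I f args (fun T hT => div_pterm I (hargs T hT))
theorem div_gformula {Fn Pr D : Type} {isP : Fn → Prop} (I : Interp Fn Pr D) :
    ∀ {G : EufFormula Fn Pr}, IsGFormula isP G → evalF (divInterp isP I) G = evalF I G
  | _, .tt => by rw [evalF, evalF]
  | _, .ff => by rw [evalF, evalF]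
  | _, .not h => by
    have a := div_gformula I h
    rw [evalF, evalF, a]
  | _, .and h1 h2 => by
    have a := div_gformula I h1
    have b := div_gformula I h2
    rw [evalF, evalF, a, b]
  | _, .or h1 h2 => by
    have a := div_gformula I h1
    have b := div_gformula I h2
    rw [evalF, evalF, a, b]
  | _, .eq h1 h2 => by
    have a := div_gterm I h1
    have b := div_gterm I h2
    rw [evalF, evalF, a, b]; simp
  | .papp q args, .papp hargs => by
    have h : ∀ T ∈ args, (evalT (divInterp isP I) T).val = evalT I T :=
      fun T hT => div_pterm I (hargs T hT)
    rw [evalF_papp, evalF_papp]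
    simp only [divInterp, List.map_map]
    congr 1
    exact List.map_congr_left h
end

theorem div_pformula {Fn Pr D : Type} {isP : Fn → Prop} (I : Interp Fn Pr D) :
    ∀ {G : EufFormula Fn Pr}, IsPFormula isP G →
    evalF (divInterp isP I) G = true → evalF I G = true
  | _, .g h => by rw [div_gformula I h]; exact id
  | _, .and h1 h2 => by
    have a := div_pformula I h1
    have b := div_pformula I h2
    rw [evalF, evalF]; simp only [Bool.and_eq_true]; tauto
  | _, .or h1 h2 => by
    have a := div_pformula I h1
    have b := div_pformula I h2
    rw [evalF, evalF]; simp only [Bool.or_eq_true]; tauto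
  | _, .eq h1 h2 => by
    rw [evalF, evalF]; simp only [decide_eq_true_eq]; rw [← div_pterm I h1, ← div_pterm I h2]
    intro h; rw [h]

/-- For any interpretation `I` of a p-formula `F` there is a maximally
diverse interpretation `I*` for `F` with `I*[F] ⇒ I[F]`. -/
theorem diverse_lemma {Fn Pr D : Type} [Nonempty D] (isP : Fn → Prop)
    (F : EufFormula Fn Pr) (hF : IsPFormula isP F) (I : Interp Fn Pr D) :
    ∃ (D' : Type) (_ : Nonempty D') (Istar : Interp Fn Pr D'),
      MaxDiverse isP Istar F ∧ (evalF Istar F = true → evalF I F = true) := by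
  obtain ⟨x⟩ := ‹Nonempty D›
  refine ⟨DivDom Fn D, ⟨.d x⟩, divInterp isP I, ?_, div_pformula I hF⟩
  intro g args hg _ T2 hT2 he
  cases T2 with
  | ite G a b => exact absurd hT2.1 (by simp [IsAppTerm])
  | app f args2 =>
    rw [evalT_app, evalT_app] at he
    simp only [divInterp, if_pos hg.1] at he
    split at he
    · injection he with _ h1 h2
      subst h1
      refine ⟨args2, rfl, ?_⟩
      have h3 : List.Forall₂ (· = ·) (args.map (evalT (divInterp isP I)))
          (args2.map (evalT (divInterp isP I))) := List.forall₂_eq_eq_eq ▸ h2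
      simpa [List.forall₂_map_left_iff, List.forall₂_map_right_iff] using h3
    · cases he
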